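/- Let C be a nonzero abelian code in 𝔽_q(r_1,…,r_s) with generating idempotent e, and let 𝔹 be a set of ds-bounds. For any ᾱ ∈ U, Δ_{𝔹,ᾱ}(C) = 𝔹-mad(M(φ_{ᾱ,e})). Consequently, Δ_𝔹(C) = max{𝔹-mad(M(φ_{ᾱ,e})) : ᾱ ∈ U}. -/

import Mathlib

/-!
The apparent distance `DeltaH` of a hypermatrix depends only on its support (`DeltaH_congr`), so
it suffices to see that the supports of the transforms of the nonzero codewords of `C` are exactly
the nonempty unions of `q`-orbits inside the support of the transform of `e`.

The transform `mDFT` is injective on `𝔽_q`-codewords and turns convolution into the pointwise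
product. For `c ∈ C` one has `c = u * e`, which gives the inclusion of supports, and the support
is a union of `q`-orbits because the value at `q·j` is the `q`-th power of the value at `j`.

Conversely, let `D` be a union of `q`-orbits inside the support of the transform of `e`. The
inverse transform of the indicator function of `D` has coefficients fixed by the `q`-power
Frobenius, so it is an `𝔽_q`-word `c` (`exists_mDFT_eq_indicator`). As `e` is idempotent, its
transform is `1` on its support, so `c * e = c` and `c` lies in the ideal `C`.
-/

open scoped Classical
open Polynomial

noncomputable section

namespace DS

/-- Hamming weight of a vector. -/
def wt {ι R : Type} [Fintype ι] [Zero R] (v : ι → R) : ℕ :=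
  (Finset.univ.filter fun i => v i ≠ 0).card

/-- Minimum (Hamming) distance of a set of codewords. -/
def minDist {ι R : Type} [Fintype ι] [Zero R] (C : Set (ι → R)) : ℕ :=
  sInf (wt '' (C \ {0}))

/-! ### Univariate (cyclic) setting -/

/-- cyclic shift = multiplication by `X` in `F[X]/(X^n-1)` -/
def shiftOne {n : ℕ} {R : Type} (v : ZMod n → R) : ZMod n → R := fun i => v (i - 1)

/-- A cyclic code: an ideal of `F[X]/(X^n-1)`, viewed through coefficient vectors. -/
def IsCyclicCode {F : Type} [Field F] {n : ℕ} (C : Set (ZMod n → F)) : Prop :=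
  (0 : ZMod n → F) ∈ C ∧ (∀ u ∈ C, ∀ v ∈ C, u + v ∈ C) ∧
    (∀ (a : F), ∀ v ∈ C, a • v ∈ C) ∧ (∀ v ∈ C, shiftOne v ∈ C)

/-- Evaluation of a (coefficient vector of a) polynomial of `L(n)` at `β`. -/
def evalV {n : ℕ} [NeZero n] {R : Type} [CommRing R] (v : ZMod n → R) (β : R) : R :=
  ∑ i : ZMod n, v i * β ^ i.val

/-- Evaluation of an `F`-polynomial at a point of an extension `L`. -/
def evalVF {F L : Type} [Field F] [CommRing L] [Algebra F L] {n : ℕ} [NeZero n]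
    (v : ZMod n → F) (β : L) : L :=
  ∑ i : ZMod n, algebraMap F L (v i) * β ^ i.val

/-- Defining set of a cyclic code with respect to `α`. -/
def defSet1 {F L : Type} [Field F] [CommRing L] [Algebra F L] {n : ℕ} [NeZero n]
    (α : L) (C : Set (ZMod n → F)) : Set (ZMod n) :=
  {i | ∀ v ∈ C, evalVF v (α ^ i.val) = 0}

/-- Discrete Fourier transform of an `F`-codeword with respect to `α`. -/
def dft1 {F L : Type} [Field F] [CommRing L] [Algebra F L] {n : ℕ} [NeZero n]
    (α : L) (c : ZMod n → F) : ZMod n → L :=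
  fun j => evalVF c (α ^ j.val)

/-- Inverse discrete Fourier transform. -/
def invDFT1 {L : Type} [Field L] {n : ℕ} [NeZero n] (α : L) (g : ZMod n → L) :
    ZMod n → L :=
  fun j => (n : L)⁻¹ * evalV g (α⁻¹ ^ j.val)

/-- The set `Z̄(v)` of `n`-th roots of unity at which `v` does not vanish. -/
def nonzeros1 {L : Type} [CommRing L] {n : ℕ} [NeZero n] (v : ZMod n → L) : Set L :=
  {β | β ^ n = 1 ∧ evalV v β ≠ 0}

/-- Multiplication (cyclic convolution) in `R[X]/(X^n-1)`. -/
def conv1 {n : ℕ} [NeZero n] {R : Type} [CommRing R] (u v : ZMod n → R) : ZMod n → R :=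
  fun i => ∑ j : ZMod n, u j * v (i - j)

/-- Coefficient vector of the reduction of `X^h·v` modulo `X^n-1`. -/
def shiftBy {n : ℕ} {R : Type} (h : ℕ) (v : ZMod n → R) : ZMod n → R :=
  fun i => v (i - (h : ZMod n))

/-- The polynomial (of degree `< n`) with coefficient vector `v`. -/
def toPoly {L : Type} [CommRing L] {n : ℕ} [NeZero n] (v : ZMod n → L) : Polynomial L :=
  ∑ i : ZMod n, Polynomial.C (v i) * Polynomial.X ^ i.val

/-! ### ds-bounds -/

/-- A defining-set bound (ds-bound) for the minimum distance of cyclic codes over `F`. -/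
structure DSBound (F : Type) [Field F] [Fintype F] where
  rel : ∀ n : ℕ, Set (ZMod n) → ℕ → Prop
  bound : ∀ (n : ℕ) [NeZero n] (C : Set (ZMod n → F)), IsCyclicCode C → C ≠ {0} →
    ∀ α : AlgebraicClosure F, IsPrimitiveRoot α n →
      ∀ (N : Set (ZMod n)) (b : ℕ), N ⊆ defSet1 α C → rel n N b → 1 ≤ b ∧ b ≤ minDist C
  mono : ∀ (n : ℕ) (N M : Set (ZMod n)), N ⊆ M → ∀ b, rel n N b → rel n M b
  one' : ∀ (n : ℕ) (N : Set (ZMod n)), rel n N 1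
  bdd : ∀ (n : ℕ) (N : Set (ZMod n)), BddAbove {b | rel n N b}

/-- The optimal ds-bound `δ̄` associated to a ds-bound `δ`. -/
def optB {F : Type} [Field F] [Fintype F] (δ : DSBound F) (n : ℕ) (N : Set (ZMod n)) : ℕ :=
  sSup {b | δ.rel n N b}

/-- Apparent distance of a vector with respect to a set `B` of ds-bounds. -/
def DeltaV {F : Type} [Field F] [Fintype F] (B : Set (DSBound F)) {L : Type} [Zero L]
    {n : ℕ} (v : ZMod n → L) : ℕ :=
  if v = 0 then 0 else sSup ((fun δ => optB δ n {i | v i ≠ 0}ᶜ) '' B)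

/-- `(B,α)`-apparent distance of a cyclic code. -/
def DeltaCodeAt1 {F : Type} [Field F] [Fintype F] {L : Type} [Field L] [Algebra F L]
    {n : ℕ} [NeZero n] (B : Set (DSBound F)) (α : L) (C : Set (ZMod n → F)) : ℕ :=
  sInf {m | ∃ c ∈ C, c ≠ 0 ∧ m = DeltaV B (dft1 α c)}

/-! ### Hypermatrices (several variables) -/

/-- Hypercolumn `H_M(j,k)` of a hypermatrix. -/
def hyperCol {L : Type} {s : ℕ} {r : Fin (s + 1) → ℕ} (M : (∀ i, ZMod (r i)) → L)
    (j : Fin (s + 1)) (k : ZMod (r j)) : (∀ i : Fin s, ZMod (r (j.succAbove i))) → L :=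
  fun x => M (j.insertNth k x)

/-- The `B`-apparent distance of an `s`-dimensional hypermatrix. -/
def DeltaH {F : Type} [Field F] [Fintype F] {L : Type} [Zero L] (B : Set (DSBound F)) :
    (s : ℕ) → (r : Fin s → ℕ) → ((∀ i, ZMod (r i)) → L) → ℕ
  | 0, _, M => if M = 0 then 0 else 1
  | s + 1, r, M =>
    if M = 0 then 0
    else
      sSup (Set.range fun j : Fin (s + 1) =>
        sSup ((fun δ => optB δ (r j) {k : ZMod (r j) | hyperCol M j k ≠ 0}ᶜ) '' B) *
        sSup ((fun k : ZMod (r j) =>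
            DeltaH B s (fun i => r (j.succAbove i)) (hyperCol M j k)) ''
          {k : ZMod (r j) | hyperCol M j k ≠ 0}))

/-- `supp_j(M)`. -/
def suppj {L : Type} [Zero L] {s : ℕ} {r : Fin (s + 1) → ℕ}
    (M : (∀ i, ZMod (r i)) → L) (j : Fin (s + 1)) : Set (ZMod (r j)) :=
  {k | hyperCol M j k ≠ 0}

/-- `ω_j(M)`. -/
def omegaj {F : Type} [Field F] [Fintype F] {L : Type} [Zero L] {s : ℕ}
    {r : Fin (s + 1) → ℕ} (B : Set (DSBound F)) (M : (∀ i, ZMod (r i)) → L)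
    (j : Fin (s + 1)) : ℕ :=
  sSup ((fun δ => optB δ (r j) (suppj M j)ᶜ) '' B)

/-- `ε_j(M)`. -/
def epsj {F : Type} [Field F] [Fintype F] {L : Type} [Zero L] {s : ℕ}
    {r : Fin (s + 1) → ℕ} (B : Set (DSBound F)) (M : (∀ i, ZMod (r i)) → L)
    (j : Fin (s + 1)) : ℕ :=
  sSup ((fun k => DeltaH B s (fun i => r (j.succAbove i)) (hyperCol M j k)) '' suppj M j)

/-- `Δ_j(M) = ω_j(M)·ε_j(M)`. -/
def Deltaj {F : Type} [Field F] [Fintype F] {L : Type} [Zero L] {s : ℕ}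
    {r : Fin (s + 1) → ℕ} (B : Set (DSBound F)) (M : (∀ i, ZMod (r i)) → L)
    (j : Fin (s + 1)) : ℕ :=
  omegaj B M j * epsj B M j

/-! ### Multivariate polynomials, DFT, abelian codes -/

/-- Evaluation of a multivariate polynomial (given by its coefficient hypermatrix). -/
def mEval {L : Type} [CommRing L] {s : ℕ} {r : Fin s → ℕ} [∀ i, NeZero (r i)]
    (f : (∀ i, ZMod (r i)) → L) (β : Fin s → L) : L :=
  ∑ j : ∀ i, ZMod (r i), f j * ∏ i, β i ^ (j i).val

/-- Multivariate discrete Fourier transform of an `F`-codeword. -/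
def mDFT {F L : Type} [Field F] [CommRing L] [Algebra F L] {s : ℕ} {r : Fin s → ℕ}
    [∀ i, NeZero (r i)] (α : Fin s → L) (c : (∀ i, ZMod (r i)) → F) :
    (∀ i, ZMod (r i)) → L :=
  fun j => ∑ k : ∀ i, ZMod (r i), algebraMap F L (c k) * ∏ i, (α i ^ (j i).val) ^ (k i).val

/-- Multivariate inverse discrete Fourier transform. -/
def mInvDFT {L : Type} [Field L] {s : ℕ} {r : Fin s → ℕ} [∀ i, NeZero (r i)]
    (α : Fin s → L) (g : (∀ i, ZMod (r i)) → L) : (∀ i, ZMod (r i)) → L :=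
  fun j => (∏ i, (r i : L))⁻¹ *
    ∑ k : ∀ i, ZMod (r i), g k * ∏ i, ((α i)⁻¹ ^ (j i).val) ^ (k i).val

/-- `Z̄(f)`: the points of `R` (products of roots of unity) where `f` does not vanish. -/
def mNonzeros {L : Type} [CommRing L] {s : ℕ} {r : Fin s → ℕ} [∀ i, NeZero (r i)]
    (f : (∀ i, ZMod (r i)) → L) : Set (Fin s → L) :=
  {β | (∀ i, β i ^ r i = 1) ∧ mEval f β ≠ 0}

/-- Multiplication by `X_t` in `F(r_1,…,r_s)`. -/
def mShift {s : ℕ} {r : Fin s → ℕ} {R : Type} (t : Fin s) (v : (∀ i, ZMod (r i)) → R) :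
    (∀ i, ZMod (r i)) → R :=
  fun j => v (fun i => if i = t then j i - 1 else j i)

/-- An abelian code: an ideal of `F[X_1,…,X_s]/(X_i^{r_i}-1)`. -/
def IsAbelianCode {F : Type} [Field F] {s : ℕ} {r : Fin s → ℕ}
    (C : Set ((∀ i, ZMod (r i)) → F)) : Prop :=
  (0 : (∀ i, ZMod (r i)) → F) ∈ C ∧ (∀ u ∈ C, ∀ v ∈ C, u + v ∈ C) ∧
    (∀ (a : F), ∀ v ∈ C, a • v ∈ C) ∧ (∀ t : Fin s, ∀ v ∈ C, mShift t v ∈ C)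

/-- Multiplication (multivariate cyclic convolution) in `R(r_1,…,r_s)`. -/
def mConv {s : ℕ} {r : Fin s → ℕ} [∀ i, NeZero (r i)] {R : Type} [CommRing R]
    (u v : (∀ i, ZMod (r i)) → R) : (∀ i, ZMod (r i)) → R :=
  fun j => ∑ k : ∀ i, ZMod (r i), u k * v (fun i => j i - k i)

/-- `(B,ᾱ)`-apparent distance of an abelian code. -/
def DeltaCodeAt {F : Type} [Field F] [Fintype F] {L : Type} [Field L] [Algebra F L]
    {s : ℕ} {r : Fin s → ℕ} [∀ i, NeZero (r i)] (B : Set (DSBound F)) (α : Fin s → L)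
    (C : Set ((∀ i, ZMod (r i)) → F)) : ℕ :=
  sInf {m | ∃ c ∈ C, c ≠ 0 ∧ m = DeltaH B s r (mDFT α c)}

/-- `B`-apparent distance of an abelian code. -/
def DeltaCode {F : Type} [Field F] [Fintype F] (L : Type) [Field L] [Algebra F L]
    {s : ℕ} {r : Fin s → ℕ} [∀ i, NeZero (r i)] (B : Set (DSBound F))
    (C : Set ((∀ i, ZMod (r i)) → F)) : ℕ :=
  sSup {m | ∃ α : Fin s → L, (∀ i, IsPrimitiveRoot (α i) (r i)) ∧ m = DeltaCodeAt B α C}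

/-! ### q-orbits, afforded hypermatrices, B-mad -/

/-- The `q`-orbit of a tuple of indices. -/
def qOrbit (q : ℕ) {s : ℕ} {r : Fin s → ℕ} (a : ∀ i, ZMod (r i)) :
    Set (∀ i, ZMod (r i)) :=
  {x | ∃ t : ℕ, x = fun i => (q : ZMod (r i)) ^ t * a i}

/-- `D` is a union of `q`-orbits. -/
def IsUnionOfQOrbits (q : ℕ) {s : ℕ} {r : Fin s → ℕ} (D : Set (∀ i, ZMod (r i))) : Prop :=
  ∀ a ∈ D, qOrbit q a ⊆ D

/-- The hypermatrix afforded by `D` (entry `0` on `D`, entry `1` outside `D`). -/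
def afforded {L : Type} [Zero L] [One L] {s : ℕ} {r : Fin s → ℕ}
    (D : Set (∀ i, ZMod (r i))) : (∀ i, ZMod (r i)) → L :=
  fun p => if p ∈ D then 0 else 1

/-- The minimum `B`-apparent distance `B-mad(M)` of a hypermatrix. -/
def Bmad {F : Type} [Field F] [Fintype F] {L : Type} [Zero L] {s : ℕ} {r : Fin s → ℕ}
    (B : Set (DSBound F)) (q : ℕ) (M : (∀ i, ZMod (r i)) → L) : ℕ :=
  sInf {m | ∃ P : (∀ i, ZMod (r i)) → L, P ≠ 0 ∧ IsUnionOfQOrbits q {p | P p ≠ 0} ∧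
    {p | P p ≠ 0} ⊆ {p | M p ≠ 0} ∧ m = DeltaH B s r P}

end DS
/-! ### Two-variable setting -/

namespace DS2
open DS

variable {r₁ r₂ : ℕ}

/-- Row `H_M(1,k)` of a matrix, i.e. the coefficient vector of `g_{1,k}`. -/
def row {L : Type} (M : ZMod r₁ × ZMod r₂ → L) (k : ZMod r₁) : ZMod r₂ → L :=
  fun j => M (k, j)

/-- Column `H_M(2,k)` of a matrix, i.e. the coefficient vector of `g_{2,k}`. -/
def col {L : Type} (M : ZMod r₁ × ZMod r₂ → L) (k : ZMod r₂) : ZMod r₁ → L :=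
  fun i => M (i, k)

/-- Row support `supp_1(M)`. -/
def supp1 {L : Type} [Zero L] (M : ZMod r₁ × ZMod r₂ → L) : Set (ZMod r₁) :=
  {k | row M k ≠ 0}

/-- Column support `supp_2(M)`. -/
def supp2 {L : Type} [Zero L] (M : ZMod r₁ × ZMod r₂ → L) : Set (ZMod r₂) :=
  {k | col M k ≠ 0}

variable {F : Type} [Field F] [Fintype F]

def omega1 {L : Type} [Zero L] (B : Set (DSBound F)) (M : ZMod r₁ × ZMod r₂ → L) : ℕ :=
  sSup ((fun δ => optB δ r₁ (supp1 M)ᶜ) '' B)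

def omega2 {L : Type} [Zero L] (B : Set (DSBound F)) (M : ZMod r₁ × ZMod r₂ → L) : ℕ :=
  sSup ((fun δ => optB δ r₂ (supp2 M)ᶜ) '' B)

def eps1 {L : Type} [Zero L] (B : Set (DSBound F)) (M : ZMod r₁ × ZMod r₂ → L) : ℕ :=
  sSup ((fun k => DeltaV B (row M k)) '' supp1 M)

def eps2 {L : Type} [Zero L] (B : Set (DSBound F)) (M : ZMod r₁ × ZMod r₂ → L) : ℕ :=
  sSup ((fun k => DeltaV B (col M k)) '' supp2 M)

/-- `B`-apparent distance of a two-variable matrix. -/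
def Delta2 {L : Type} [Zero L] (B : Set (DSBound F)) (M : ZMod r₁ × ZMod r₂ → L) : ℕ :=
  if M = 0 then 0 else max (omega1 B M * eps1 B M) (omega2 B M * eps2 B M)

/-! ### the BCH ds-bound, concretely -/

/-- `N` contains `a-1` consecutive integers modulo `n`. -/
def HasConsecutive {n : ℕ} (N : Set (ZMod n)) (a : ℕ) : Prop :=
  ∃ i0 : ZMod n, ∀ t : ℕ, t < a - 1 → i0 + (t : ZMod n) ∈ N

/-- The BCH ds-bound relation `(N,a) ∈ (δ_BCH)_n`. -/
def bchRel {n : ℕ} (N : Set (ZMod n)) (a : ℕ) : Prop :=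
  a = 1 ∨ (2 ≤ a ∧ HasConsecutive N a)

/-- The optimal BCH ds-bound `δ̄_BCH`. -/
def bchOpt (n : ℕ) (N : Set (ZMod n)) : ℕ := sSup {a | bchRel N a}

/-- BCH apparent distance of a vector. -/
def bchV {L : Type} [Zero L] {n : ℕ} (v : ZMod n → L) : ℕ :=
  if v = 0 then 0 else bchOpt n {i | v i ≠ 0}ᶜ

def bchOmega1 {L : Type} [Zero L] (M : ZMod r₁ × ZMod r₂ → L) : ℕ :=
  bchOpt r₁ (supp1 M)ᶜ

def bchOmega2 {L : Type} [Zero L] (M : ZMod r₁ × ZMod r₂ → L) : ℕ :=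
  bchOpt r₂ (supp2 M)ᶜ

def bchEps1 {L : Type} [Zero L] (M : ZMod r₁ × ZMod r₂ → L) : ℕ :=
  sSup ((fun k => bchV (row M k)) '' supp1 M)

def bchEps2 {L : Type} [Zero L] (M : ZMod r₁ × ZMod r₂ → L) : ℕ :=
  sSup ((fun k => bchV (col M k)) '' supp2 M)

/-- `Δ_1(M)` for the BCH bound. -/
def bchD1 {L : Type} [Zero L] (M : ZMod r₁ × ZMod r₂ → L) : ℕ := bchOmega1 M * bchEps1 M

/-- `Δ_2(M)` for the BCH bound. -/
def bchD2 {L : Type} [Zero L] (M : ZMod r₁ × ZMod r₂ → L) : ℕ := bchOmega2 M * bchEps2 M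

/-- BCH apparent distance of a two-variable matrix. -/
def bchDelta {L : Type} [Zero L] (M : ZMod r₁ × ZMod r₂ → L) : ℕ :=
  if M = 0 then 0 else max (bchD1 M) (bchD2 M)

/-! ### bivariate polynomials, DFT, codes -/

/-- Evaluation of a bivariate polynomial at `(u,v)`. -/
def eval2 {L : Type} [CommRing L] [NeZero r₁] [NeZero r₂] (g : ZMod r₁ × ZMod r₂ → L)
    (u v : L) : L :=
  ∑ p : ZMod r₁ × ZMod r₂, g p * u ^ p.1.val * v ^ p.2.val

/-- Bivariate DFT of an `F`-codeword. -/
def dft2 {F L : Type} [Field F] [CommRing L] [Algebra F L] [NeZero r₁] [NeZero r₂]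
    (α₁ α₂ : L) (c : ZMod r₁ × ZMod r₂ → F) : ZMod r₁ × ZMod r₂ → L :=
  fun j => ∑ p : ZMod r₁ × ZMod r₂,
    algebraMap F L (c p) * (α₁ ^ j.1.val) ^ p.1.val * (α₂ ^ j.2.val) ^ p.2.val

/-- Bivariate inverse DFT. -/
def invDFT2 {L : Type} [Field L] [NeZero r₁] [NeZero r₂] (α₁ α₂ : L)
    (g : ZMod r₁ × ZMod r₂ → L) : ZMod r₁ × ZMod r₂ → L :=
  fun j => ((r₁ : L) * (r₂ : L))⁻¹ * eval2 g (α₁⁻¹ ^ j.1.val) (α₂⁻¹ ^ j.2.val)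

/-- `Z̄(g)` for a bivariate polynomial. -/
def nonzeros2 {L : Type} [CommRing L] [NeZero r₁] [NeZero r₂]
    (g : ZMod r₁ × ZMod r₂ → L) : Set (L × L) :=
  {p | p.1 ^ r₁ = 1 ∧ p.2 ^ r₂ = 1 ∧ eval2 g p.1 p.2 ≠ 0}

/-- Multiplication (convolution) in `L(r₁,r₂)`. -/
def conv2 {L : Type} [CommRing L] [NeZero r₁] [NeZero r₂]
    (u w : ZMod r₁ × ZMod r₂ → L) : ZMod r₁ × ZMod r₂ → L :=
  fun p => ∑ t : ZMod r₁ × ZMod r₂, u t * w (p.1 - t.1, p.2 - t.2)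

/-- The coefficient matrix of the product `a(X₁)·b(X₂)`. -/
def prodPoly {L : Type} [Mul L] (a : ZMod r₁ → L) (b : ZMod r₂ → L) :
    ZMod r₁ × ZMod r₂ → L :=
  fun p => a p.1 * b p.2

/-- `g(X₁,v)`: the coefficient vector in `X₁` of `g` with `X₂` evaluated at `v`. -/
def secEval {L : Type} [CommRing L] [NeZero r₂] (g : ZMod r₁ × ZMod r₂ → L) (v : L) :
    ZMod r₁ → L :=
  fun i => evalV (row g i) v

/-- `g(u,X₂)`: the coefficient vector in `X₂` of `g` with `X₁` evaluated at `u`. -/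
def fstEval {L : Type} [CommRing L] [NeZero r₁] (g : ZMod r₁ × ZMod r₂ → L) (u : L) :
    ZMod r₂ → L :=
  fun j => evalV (col g j) u

/-- Defining set of a bivariate abelian code. -/
def defSet2 {F L : Type} [Field F] [CommRing L] [Algebra F L] [NeZero r₁] [NeZero r₂]
    (α₁ α₂ : L) (C : Set (ZMod r₁ × ZMod r₂ → F)) : Set (ZMod r₁ × ZMod r₂) :=
  {j | ∀ c ∈ C, dft2 α₁ α₂ c j = 0}

/-- Multiplication by `X₁`. -/
def shiftX {R : Type} (v : ZMod r₁ × ZMod r₂ → R) : ZMod r₁ × ZMod r₂ → R :=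
  fun p => v (p.1 - 1, p.2)

/-- Multiplication by `X₂`. -/
def shiftY {R : Type} (v : ZMod r₁ × ZMod r₂ → R) : ZMod r₁ × ZMod r₂ → R :=
  fun p => v (p.1, p.2 - 1)

/-- A bivariate abelian code: an ideal of `F[X₁,X₂]/(X₁^{r₁}-1, X₂^{r₂}-1)`. -/
def IsAbelianCode2 {F : Type} [Field F] (C : Set (ZMod r₁ × ZMod r₂ → F)) : Prop :=
  (0 : ZMod r₁ × ZMod r₂ → F) ∈ C ∧ (∀ u ∈ C, ∀ v ∈ C, u + v ∈ C) ∧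
    (∀ (a : F), ∀ v ∈ C, a • v ∈ C) ∧ (∀ v ∈ C, shiftX v ∈ C) ∧ (∀ v ∈ C, shiftY v ∈ C)

/-- The abelian code (ideal) generated by `c₀`. -/
def codeGen2 {F : Type} [Field F] (c₀ : ZMod r₁ × ZMod r₂ → F) :
    Set (ZMod r₁ × ZMod r₂ → F) :=
  ⋂₀ {S | IsAbelianCode2 S ∧ c₀ ∈ S}

/-- `(B,ᾱ)`-apparent distance of a bivariate abelian code. -/
def DeltaCodeAt2 {L : Type} [Field L] [Algebra F L] [NeZero r₁] [NeZero r₂]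
    (B : Set (DSBound F)) (α₁ α₂ : L) (C : Set (ZMod r₁ × ZMod r₂ → F)) : ℕ :=
  sInf {m | ∃ c ∈ C, c ≠ 0 ∧ m = Delta2 B (dft2 α₁ α₂ c)}

/-- `B`-apparent distance of a bivariate abelian code. -/
def DeltaCode2 (L : Type) [Field L] [Algebra F L] [NeZero r₁] [NeZero r₂]
    (B : Set (DSBound F)) (C : Set (ZMod r₁ × ZMod r₂ → F)) : ℕ :=
  sSup {m | ∃ α₁ α₂ : L, IsPrimitiveRoot α₁ r₁ ∧ IsPrimitiveRoot α₂ r₂ ∧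
    m = DeltaCodeAt2 B α₁ α₂ C}

/-- BCH `ᾱ`-apparent distance of a bivariate abelian code. -/
def bchDeltaCodeAt2 {L : Type} [Field L] [Algebra F L] [NeZero r₁] [NeZero r₂]
    (α₁ α₂ : L) (C : Set (ZMod r₁ × ZMod r₂ → F)) : ℕ :=
  sInf {m | ∃ c ∈ C, c ≠ 0 ∧ m = bchDelta (dft2 α₁ α₂ c)}

/-- BCH apparent distance of a bivariate abelian code. -/
def bchDeltaCode2 (L : Type) [Field L] [Algebra F L] [NeZero r₁] [NeZero r₂]
    (C : Set (ZMod r₁ × ZMod r₂ → F)) : ℕ :=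
  sSup {m | ∃ α₁ α₂ : L, IsPrimitiveRoot α₁ r₁ ∧ IsPrimitiveRoot α₂ r₂ ∧
    m = bchDeltaCodeAt2 α₁ α₂ C}

/-! ### q-orbits in two variables -/

def qOrbit2 (q : ℕ) (a : ZMod r₁ × ZMod r₂) : Set (ZMod r₁ × ZMod r₂) :=
  {x | ∃ t : ℕ, x = ((q : ZMod r₁) ^ t * a.1, (q : ZMod r₂) ^ t * a.2)}

def IsUnionOfQOrbits2 (q : ℕ) (D : Set (ZMod r₁ × ZMod r₂)) : Prop :=
  ∀ a ∈ D, qOrbit2 q a ⊆ D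

/-- The matrix afforded by `D`. -/
def afforded2 {L : Type} [Zero L] [One L] (D : Set (ZMod r₁ × ZMod r₂)) :
    ZMod r₁ × ZMod r₂ → L :=
  fun p => if p ∈ D then 0 else 1

/-- Minimum `B`-apparent distance `B-mad(M)` of a matrix. -/
def Bmad2 {L : Type} [Zero L] (B : Set (DSBound F)) (q : ℕ)
    (M : ZMod r₁ × ZMod r₂ → L) : ℕ :=
  sInf {m | ∃ P : ZMod r₁ × ZMod r₂ → L, P ≠ 0 ∧ IsUnionOfQOrbits2 q {p | P p ≠ 0} ∧
    {p | P p ≠ 0} ⊆ {p | M p ≠ 0} ∧ m = Delta2 B P}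

/-- Minimum BCH apparent distance of a matrix. -/
def bchBmad2 {L : Type} [Zero L] (q : ℕ) (M : ZMod r₁ × ZMod r₂ → L) : ℕ :=
  sInf {m | ∃ P : ZMod r₁ × ZMod r₂ → L, P ≠ 0 ∧ IsUnionOfQOrbits2 q {p | P p ≠ 0} ∧
    {p | P p ≠ 0} ⊆ {p | M p ≠ 0} ∧ m = bchDelta P}

/-! ### BCH codes -/

/-- The `q`-cyclotomic coset of `b` modulo `n`. -/
def cycCoset (q : ℕ) {n : ℕ} (b : ZMod n) : Set (ZMod n) :=
  {x | ∃ t : ℕ, x = (q : ZMod n) ^ t * b}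

/-- The defining set `∪_{l=0}^{δ-2} C_q(b+l)` of the BCH code `B_q(α,δ,b)`. -/
def bchDefSet (q : ℕ) {n : ℕ} (δ : ℕ) (b : ZMod n) : Set (ZMod n) :=
  ⋃ l ∈ Finset.range (δ - 1), cycCoset q (b + (l : ZMod n))

/-- `C` is a BCH cyclic code (in the classical sense) with respect to `α`. -/
def IsBCHCyclicCode {F L : Type} [Field F] [Fintype F] [CommRing L] [Algebra F L]
    {n : ℕ} [NeZero n] (α : L) (C : Set (ZMod n → F)) : Prop :=
  ∃ (δ : ℕ) (b : ZMod n), 2 ≤ δ ∧ δ ≤ n ∧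
    DS.defSet1 α C = bchDefSet (Fintype.card F) δ b

/-- The defining set of a bivariate BCH code with parameters `γ, δ₁, δ₂, b₁, b₂`. -/
def bivarBCHDefSet (q : ℕ) (γ : Set (Fin 2)) (δ₁ δ₂ : ℕ) (b₁ : ZMod r₁) (b₂ : ZMod r₂) :
    Set (ZMod r₁ × ZMod r₂) :=
  {p | 0 ∈ γ ∧ ∃ l ∈ Finset.range (δ₁ - 1), ∃ a : ZMod r₁ × ZMod r₂,
      a.1 = b₁ + (l : ZMod r₁) ∧ p ∈ qOrbit2 q a} ∪
  {p | 1 ∈ γ ∧ ∃ l ∈ Finset.range (δ₂ - 1), ∃ a : ZMod r₁ × ZMod r₂,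
      a.2 = b₂ + (l : ZMod r₂) ∧ p ∈ qOrbit2 q a}

/-- `C` is a bivariate BCH code with respect to `(α₁,α₂)`. -/
def IsBivarBCH {F L : Type} [Field F] [Fintype F] [CommRing L] [Algebra F L]
    [NeZero r₁] [NeZero r₂] (α₁ α₂ : L) (C : Set (ZMod r₁ × ZMod r₂ → F)) : Prop :=
  ∃ (γ : Set (Fin 2)) (δ₁ δ₂ : ℕ) (b₁ : ZMod r₁) (b₂ : ZMod r₂),
    (0 ∈ γ → 2 ≤ δ₁ ∧ δ₁ ≤ r₁) ∧ (1 ∈ γ → 2 ≤ δ₂ ∧ δ₂ ≤ r₂) ∧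
    defSet2 α₁ α₂ C = bivarBCHDefSet (Fintype.card F) γ δ₁ δ₂ b₁ b₂

/-- Permutation equivalence of codes (permutation of the coordinate positions). -/
def PermEquiv {F : Type} [Field F] (C C' : Set (ZMod r₁ × ZMod r₂ → F)) : Prop :=
  ∃ σ : Equiv.Perm (ZMod r₁ × ZMod r₂), C' = (fun c => c ∘ σ) '' C

end DS2

end

open DS

/-! ### Characters and the discrete Fourier transform -/

/-- Stability under multiplication by `q` is enough for being a union of `q`-orbits. -/
theorem isUnionOfQOrbits_of_mul {s : ℕ} {r : Fin s → ℕ} {q : ℕ}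
    {D : Set (∀ i, ZMod (r i))}
    (h : ∀ a ∈ D, (fun i => (q : ZMod (r i)) * a i) ∈ D) : IsUnionOfQOrbits q D := by
  rintro a ha x ⟨t, rfl⟩
  induction t with
  | zero => simpa using ha
  | succ t ih =>
    have := h _ ih
    simpa only [pow_succ', mul_assoc] using this

section Helpers

variable {F : Type} [Field F] {L : Type} [Field L] [Algebra F L]
variable {s : ℕ} {r : Fin s → ℕ} [∀ i, NeZero (r i)]

/-- `chi α j k = ᾱ^{j·k}`, the kernel of the discrete Fourier transform. -/
noncomputable def chi (α : Fin s → L) (j k : ∀ i, ZMod (r i)) : L :=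
  ∏ i, (α i ^ (j i).val) ^ (k i).val

/-- The exponent of `ᾱ` in `chi` may be reduced modulo `r`: `chi` is a product of values of
additive characters of the `ℤ/r_i`. All the identities for `chi` come from this form. -/
theorem chi_eq {α : Fin s → L} (hα : ∀ i, IsPrimitiveRoot (α i) (r i))
    (j k : ∀ i, ZMod (r i)) :
    chi α j k = ∏ i, AddChar.zmodChar (r i) (hα i).pow_eq_one (j i * k i) := by
  unfold chi
  refine Finset.prod_congr rfl fun i _ => ?_
  rw [← pow_mul, ← AddChar.zmodChar_apply' (hα i).pow_eq_one]
  simp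

theorem chi_comm {α : Fin s → L} (hα : ∀ i, IsPrimitiveRoot (α i) (r i))
    (j k : ∀ i, ZMod (r i)) : chi α j k = chi α k j := by
  simp [chi_eq hα, mul_comm]

theorem chi_add {α : Fin s → L} (hα : ∀ i, IsPrimitiveRoot (α i) (r i))
    (j k l : ∀ i, ZMod (r i)) : chi α j (k + l) = chi α j k * chi α j l := by
  simp [chi_eq hα, mul_add, AddChar.map_add_eq_mul, Finset.prod_mul_distrib]

theorem chi_neg_left {α : Fin s → L} (hα : ∀ i, IsPrimitiveRoot (α i) (r i))
    (j k : ∀ i, ZMod (r i)) : chi α (-j) k = chi α j (-k) := by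
  simp [chi_eq hα]

/-- Applying the `q`-th power to a character value moves the index along its `q`-orbit. -/
theorem chi_pow {α : Fin s → L} (hα : ∀ i, IsPrimitiveRoot (α i) (r i)) (q : ℕ)
    (j k : ∀ i, ZMod (r i)) :
    chi α j k ^ q = chi α (fun i => (q : ZMod (r i)) * j i) k := by
  rw [chi_eq hα, chi_eq hα, ← Finset.prod_pow]
  refine Finset.prod_congr rfl fun i _ => ?_
  rw [← AddChar.map_nsmul_eq_pow, nsmul_eq_mul, mul_assoc]

/-- Orthogonality of characters. -/
theorem sum_chi {α : Fin s → L} (hα : ∀ i, IsPrimitiveRoot (α i) (r i))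
    (k : ∀ i, ZMod (r i)) :
    ∑ j, chi α j k = if k = 0 then ∏ i, (r i : L) else 0 := by
  simp only [chi_eq hα]
  have h := Finset.prod_univ_sum (R := L) (fun i => (Finset.univ : Finset (ZMod (r i))))
    (fun i x => AddChar.zmodChar (r i) (hα i).pow_eq_one (x * k i))
  rw [Fintype.piFinset_univ] at h
  rw [← h]
  have h2 : ∀ i, ∑ x, AddChar.zmodChar (r i) (hα i).pow_eq_one (x * k i)
      = if k i = 0 then (r i : L) else 0 := by
    intro i
    rw [AddChar.sum_mulShift (k i) (AddChar.zmodChar_primitive_of_primitive_root _ (hα i))]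
    split_ifs <;> simp [ZMod.card]
  simp only [h2]
  split_ifs with hk
  · simp [hk]
  · obtain ⟨i, hi⟩ := Function.ne_iff.mp hk
    exact Finset.prod_eq_zero (Finset.mem_univ i) (if_neg hi)

theorem prod_r_ne_zero {α : Fin s → L} (hα : ∀ i, IsPrimitiveRoot (α i) (r i)) :
    (∏ i, (r i : L)) ≠ 0 :=
  Finset.prod_ne_zero_iff.mpr fun i _ => ((hα i).neZero').ne

theorem mDFT_apply (α : Fin s → L) (c : (∀ i, ZMod (r i)) → F) (j : ∀ i, ZMod (r i)) :
    mDFT α c j = ∑ k, algebraMap F L (c k) * chi α j k := rfl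

/-- Fourier inversion. -/
theorem mDFT_inversion {α : Fin s → L} (hα : ∀ i, IsPrimitiveRoot (α i) (r i))
    (c : (∀ i, ZMod (r i)) → F) (l : ∀ i, ZMod (r i)) :
    ∑ j, mDFT α c j * chi α j (-l) = (∏ i, (r i : L)) * algebraMap F L (c l) := by
  simp only [mDFT_apply, Finset.sum_mul]
  rw [Finset.sum_comm]
  have : ∀ k, ∑ j, algebraMap F L (c k) * chi α j k * chi α j (-l)
      = if k = l then (∏ i, (r i : L)) * algebraMap F L (c l) else 0 := by
    intro k
    simp only [mul_assoc, ← chi_add hα, ← Finset.mul_sum, sum_chi hα, ← sub_eq_add_neg,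
      sub_eq_zero]
    split_ifs with h
    · rw [h, mul_comm]
    · simp
  simp [this]

theorem mDFT_injective {α : Fin s → L} (hα : ∀ i, IsPrimitiveRoot (α i) (r i)) :
    Function.Injective (mDFT α : ((∀ i, ZMod (r i)) → F) → _) := by
  intro c d h
  funext l
  have h1 := mDFT_inversion hα c l
  rw [h, mDFT_inversion hα d l] at h1
  exact ((algebraMap F L).injective (mul_left_cancel₀ (prod_r_ne_zero hα) h1)).symm

theorem mDFT_zero (α : Fin s → L) : mDFT α (0 : (∀ i, ZMod (r i)) → F) = 0 := by
  funext j
  simp [mDFT_apply]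

/-- The Fourier transform turns convolution into the pointwise product. -/
theorem mDFT_mConv {α : Fin s → L} (hα : ∀ i, IsPrimitiveRoot (α i) (r i))
    (u v : (∀ i, ZMod (r i)) → F) (j : ∀ i, ZMod (r i)) :
    mDFT α (mConv u v) j = mDFT α u j * mDFT α v j := by
  simp only [mDFT_apply, mConv, map_sum, map_mul, Finset.sum_mul]
  rw [Finset.sum_comm]
  refine Finset.sum_congr rfl fun k _ => ?_
  rw [← Equiv.sum_comp (Equiv.addLeft k), Finset.mul_sum]
  refine Finset.sum_congr rfl fun l _ => ?_
  have : (fun i => (Equiv.addLeft k) l i - k i) = l := by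
    funext i; simp
  rw [this, Equiv.coe_addLeft, chi_add hα]
  ring

/-- Over `𝔽_q`, the transform at `q·j` is the `q`-th power of the transform at `j`. -/
theorem mDFT_pow_card [Fintype F] {α : Fin s → L} (hα : ∀ i, IsPrimitiveRoot (α i) (r i))
    (c : (∀ i, ZMod (r i)) → F) (j : ∀ i, ZMod (r i)) :
    mDFT α c (fun i => (Fintype.card F : ZMod (r i)) * j i)
      = mDFT α c j ^ Fintype.card F := by
  have := map_sum (FiniteField.frobeniusAlgHom F L)
    (fun k => algebraMap F L (c k) * chi α j k) Finset.univ
  rw [FiniteField.frobeniusAlgHom_apply] at this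
  rw [mDFT_apply, mDFT_apply, this]
  refine Finset.sum_congr rfl fun k _ => ?_
  rw [FiniteField.frobeniusAlgHom_apply, mul_pow, ← map_pow, FiniteField.pow_card, chi_pow hα]

theorem isUnionOfQOrbits_mDFT [Fintype F] {α : Fin s → L}
    (hα : ∀ i, IsPrimitiveRoot (α i) (r i)) (c : (∀ i, ZMod (r i)) → F) :
    IsUnionOfQOrbits (Fintype.card F) {p | mDFT α c p ≠ 0} := by
  refine isUnionOfQOrbits_of_mul fun a ha => ?_
  simp only [Set.mem_ofPred_eq, mDFT_pow_card hα] at ha ⊢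
  exact pow_ne_zero _ ha

/-! ### Codewords over the base field with prescribed support of the transform -/

/-- Elements of an extension fixed by the `q`-power Frobenius lie in `𝔽_q`. -/
theorem exists_algebraMap_of_pow_card [Fintype F] {x : L} (hx : x ^ Fintype.card F = x) :
    ∃ a : F, algebraMap F L a = x := by
  have hq : 1 < Fintype.card F := Fintype.one_lt_card
  have hroots := FiniteField.roots_X_pow_card_sub_X F
  have hprod := Polynomial.prod_multiset_X_sub_C_of_monic_of_roots_card_eq
    (p := (X ^ Fintype.card F - X : F[X]))
    (Polynomial.monic_X_pow_sub (by rw [Polynomial.degree_X]; exact_mod_cast hq))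
    (by rw [hroots, FiniteField.X_pow_card_sub_X_natDegree_eq F hq]; rfl)
  have := congrArg (Polynomial.aeval x) hprod
  rw [hroots] at this
  change Polynomial.aeval x (∏ a : F, (X - Polynomial.C a)) = _ at this
  simp only [map_prod, map_sub, Polynomial.aeval_X, Polynomial.aeval_C, map_pow, hx, sub_self,
    Finset.prod_eq_zero_iff, Finset.mem_univ, true_and] at this
  obtain ⟨a, ha⟩ := this
  exact ⟨a, (sub_eq_zero.mp ha).symm⟩

/-- Multiplication by `q` permutes the index set, as `q` is a unit modulo each `r_i`. -/
theorem mul_q_bijective {q : ℕ} (hr : ∀ i, Nat.Coprime (r i) q) :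
    Function.Bijective fun (a : ∀ i, ZMod (r i)) => fun i => (q : ZMod (r i)) * a i := by
  rw [← Finite.injective_iff_bijective]
  intro a b h
  funext i
  exact ((ZMod.isUnit_iff_coprime _ _).mpr (hr i).symm).mul_left_cancel (congrFun h i)

/-- A union `D` of `q`-orbits has an `𝔽_q`-codeword whose transform is its indicator function:
the coefficients of the inverse transform are fixed by Frobenius. -/
theorem exists_mDFT_eq_indicator [Fintype F] {α : Fin s → L}
    (hα : ∀ i, IsPrimitiveRoot (α i) (r i))
    (hr : ∀ i, Nat.Coprime (r i) (Fintype.card F)) {D : Set (∀ i, ZMod (r i))}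
    (hD : IsUnionOfQOrbits (Fintype.card F) D) :
    ∃ c : (∀ i, ZMod (r i)) → F, mDFT α c = fun p => if p ∈ D then 1 else 0 := by
  have hbij := mul_q_bijective (r := r) hr
  set m : (∀ i, ZMod (r i)) → (∀ i, ZMod (r i)) :=
    fun a i => (Fintype.card F : ZMod (r i)) * a i with hm
  have hmaps : Set.MapsTo m D D := fun a ha => hD a ha ⟨1, by simp [hm]⟩
  -- Multiplication by `q` is injective on the finite set `D`, hence permutes it.
  have hmem : ∀ a, m a ∈ D ↔ a ∈ D := by
    refine fun a => ⟨fun ha => ?_, fun ha => hmaps ha⟩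
    obtain ⟨⟨b, hb⟩, hba⟩ := Finite.surjective_of_injective
      (hmaps.restrict_inj.mpr hbij.1.injOn) ⟨m a, ha⟩
    rwa [← hbij.1 (congrArg Subtype.val hba)]
  set g : (∀ i, ZMod (r i)) → L := fun p => if p ∈ D then 1 else 0 with hg
  set R : L := ∏ i, (r i : L) with hR
  have hR0 : R ≠ 0 := prod_r_ne_zero hα
  have hRq : R ^ Fintype.card F = R := by
    have : R = algebraMap F L (∏ i, (r i : F)) := by simp [hR]
    rw [this, ← map_pow, FiniteField.pow_card]
  set y : (∀ i, ZMod (r i)) → L := fun l => R⁻¹ * ∑ j, g j * chi α j (-l) with hy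
  have hfix : ∀ l, y l ^ Fintype.card F = y l := by
    intro l
    simp only [hy, mul_pow, inv_pow, hRq]
    congr 1
    have := map_sum (FiniteField.frobeniusAlgHom F L)
      (fun j => g j * chi α j (-l)) Finset.univ
    rw [FiniteField.frobeniusAlgHom_apply] at this
    rw [this]
    refine Eq.trans ?_ (hbij.sum_comp _)
    refine Finset.sum_congr rfl fun k _ => ?_
    rw [FiniteField.frobeniusAlgHom_apply, mul_pow, chi_pow hα]
    congr 1
    simp only [hg, hmem]
    split_ifs
    · simp
    · exact zero_pow Fintype.card_ne_zero
  choose c hc using fun l => exists_algebraMap_of_pow_card (F := F) (hfix l)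
  refine ⟨c, ?_⟩
  funext p
  simp only [mDFT_apply, hc, hy, mul_assoc, Finset.sum_mul]
  rw [← Finset.mul_sum, Finset.sum_comm]
  have : ∀ j, ∑ l, g j * (chi α j (-l) * chi α p l) = if j = p then R * g p else 0 := by
    intro j
    have h1 : ∀ l, chi α j (-l) * chi α p l = chi α l (p - j) := by
      intro l
      rw [← chi_neg_left hα, chi_comm hα _ l, chi_comm hα _ l, ← chi_add hα]
      congr 1
      abel
    simp only [h1, ← Finset.mul_sum, sum_chi hα, sub_eq_zero, eq_comm (a := p)]
    split_ifs with h
    · rw [h, mul_comm]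
    · simp
  simp [this, hR0]

/-! ### Abelian codes are ideals -/

/-- An abelian code is closed under translation by any element of the index group. -/
theorem abelianCode_translate_mem {C : Set ((∀ i, ZMod (r i)) → F)} (hC : IsAbelianCode C)
    {v : (∀ i, ZMod (r i)) → F} (hv : v ∈ C) (k : ∀ i, ZMod (r i)) :
    (fun j => v (j - k)) ∈ C := by
  have hstep : ∀ (t : Fin s) (n : ℕ) (w : (∀ i, ZMod (r i)) → F), w ∈ C →
      (fun j => w (j - Pi.single t (n : ZMod (r t)))) ∈ C := by
    intro t n w hw
    induction n with
    | zero => simpa using hw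
    | succ n ih =>
      convert hC.2.2.2 t _ ih using 1
      funext j
      simp only [mShift]
      congr 1
      funext i
      by_cases h : i = t
      · subst h
        simp
        ring
      · simp [h]
  have hsum : ∀ (S : Finset (Fin s)), (fun j => v (j - ∑ t ∈ S, Pi.single t (k t))) ∈ C := by
    intro S
    induction S using Finset.induction_on with
    | empty => simpa using hv
    | insert t S ht ih =>
      convert hstep t (k t).val _ ih using 1
      funext j
      simp only [Finset.sum_insert ht, ZMod.natCast_zmod_val, sub_sub]
  simpa only [Finset.univ_sum_single] using hsum Finset.univ

theorem abelianCode_mConv_mem {C : Set ((∀ i, ZMod (r i)) → F)} (hC : IsAbelianCode C)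
    (u : (∀ i, ZMod (r i)) → F) {v : (∀ i, ZMod (r i)) → F} (hv : v ∈ C) :
    mConv u v ∈ C := by
  have hsum : ∀ (S : Finset (∀ i, ZMod (r i))),
      (∑ k ∈ S, u k • fun j : (∀ i, ZMod (r i)) => v (j - k)) ∈ C := by
    intro S
    induction S using Finset.induction_on with
    | empty => simpa using hC.1
    | insert t S ht ih =>
      rw [Finset.sum_insert ht]
      exact hC.2.1 _ (hC.2.2.1 _ _ (abelianCode_translate_mem hC hv t)) _ ih
  convert hsum Finset.univ using 1
  funext j
  simp only [mConv, Finset.sum_apply, Pi.smul_apply, smul_eq_mul]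
  rfl

end Helpers

/-! ### Apparent distance and support -/

/-- The apparent distance of a hypermatrix depends only on its support. -/
theorem DeltaH_congr {F : Type} [Field F] [Fintype F] {L : Type} [Zero L]
    (B : Set (DSBound F)) : ∀ (s : ℕ) (r : Fin s → ℕ) (M M' : (∀ i, ZMod (r i)) → L),
    (∀ p, M p = 0 ↔ M' p = 0) → DeltaH B s r M = DeltaH B s r M' := by
  intro s
  induction s with
  | zero =>
    intro r M M' h
    have h0 : M = 0 ↔ M' = 0 := by simp [funext_iff, h]
    simp only [DeltaH, h0]
  | succ s ih =>
    intro r M M' h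
    have h0 : M = 0 ↔ M' = 0 := by simp [funext_iff, h]
    have hcol : ∀ j k, hyperCol M j k ≠ 0 ↔ hyperCol M' j k ≠ 0 := by
      intro j k
      simp [funext_iff, hyperCol, h]
    have hrec : ∀ j k, DeltaH B s (fun i => r (j.succAbove i)) (hyperCol M j k)
        = DeltaH B s (fun i => r (j.succAbove i)) (hyperCol M' j k) :=
      fun j k => ih _ _ _ fun p => h _
    simp only [DeltaH, h0, hcol, hrec]

/-- For a nonzero abelian code with generating idempotent `e`,
`Δ_{𝔹,ᾱ}(C) = 𝔹-mad(M(φ_{ᾱ,e}))` and `Δ_𝔹(C) = max_ᾱ 𝔹-mad(M(φ_{ᾱ,e}))`. -/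
theorem stmt_6 {F : Type} [Field F] [Fintype F] {L : Type} [Field L] [Algebra F L]
    (s : ℕ) (r : Fin s → ℕ) [∀ i, NeZero (r i)]
    (hr : ∀ i, Nat.Coprime (r i) (Fintype.card F))
    (B : Set (DSBound F))
    (C : Set ((∀ i, ZMod (r i)) → F)) (hC : IsAbelianCode C) (hC0 : C ≠ {0})
    (e : (∀ i, ZMod (r i)) → F) (heC : e ∈ C) (heIdem : mConv e e = e)
    (heGen : ∀ c ∈ C, ∃ u, c = mConv u e) :
    (∀ α : Fin s → L, (∀ i, IsPrimitiveRoot (α i) (r i)) →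
      DeltaCodeAt B α C = Bmad B (Fintype.card F) (mDFT α e)) ∧
    DeltaCode L B C =
      sSup {m | ∃ α : Fin s → L, (∀ i, IsPrimitiveRoot (α i) (r i)) ∧
        m = Bmad B (Fintype.card F) (mDFT α e)} := by
  have key : ∀ α : Fin s → L, (∀ i, IsPrimitiveRoot (α i) (r i)) →
      DeltaCodeAt B α C = Bmad B (Fintype.card F) (mDFT α e) := by
    intro α hα
    unfold DeltaCodeAt Bmad
    congr 1
    ext m
    constructor
    · rintro ⟨c, hcC, hc0, rfl⟩
      refine ⟨mDFT α c, ?_, isUnionOfQOrbits_mDFT hα c, ?_, rfl⟩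
      · rw [← mDFT_zero (F := F) α]
        exact (mDFT_injective hα).ne hc0
      · obtain ⟨u, rfl⟩ := heGen c hcC
        intro p hp
        rw [Set.mem_ofPred_eq, mDFT_mConv hα] at hp
        exact right_ne_zero_of_mul hp
    · rintro ⟨P, hP0, hPorb, hPsub, rfl⟩
      obtain ⟨c, hc⟩ := exists_mDFT_eq_indicator hα hr hPorb
      -- The transform of `e` is idempotent, hence equal to `1` on its support, so `c * e = c`.
      have hce : mConv c e = c := by
        refine mDFT_injective hα (funext fun p => ?_)
        rw [mDFT_mConv hα, hc]
        dsimp only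
        split_ifs with hp
        · have hidem := mDFT_mConv hα e e p
          rw [heIdem] at hidem
          rw [one_mul]
          exact mul_right_cancel₀ (hPsub hp) (by rw [one_mul, ← hidem])
        · simp
      have hsupp : ∀ p, P p = 0 ↔ mDFT α c p = 0 := by
        intro p
        simp [hc]
      refine ⟨c, hce ▸ abelianCode_mConv_mem hC c heC, ?_, DeltaH_congr B s r _ _ hsupp⟩
      rintro rfl
      exact hP0 (funext fun p => (hsupp p).mpr (by rw [mDFT_zero]; rfl))
  refine ⟨key, ?_⟩
  unfold DeltaCode
  congr 1
  ext m
  exact exists_congr fun α => and_congr_right fun hα => by rw [key α hα]
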